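/- Let D be a triangulated category equipped with a t-structure with heart-cohomology functors H^n, and let H : D → A be a cohomological functor to an abelian category A. Let a ≤ b be integers and let K be an object of D with H^c(K) = 0 for all c < a and all c > b, and suppose H(H^c(K)[-c]) = 0 and H(H^c(K)[-c-1]) = 0 for every integer c with a < c ≤ b. Then H(K) ≅ H(H^a(K)[-a]). -/

import Mathlib

/-!
The functor `Hfun` cannot distinguish `τ≤(c-1) K` from `τ≤c K` for `a < c ≤ b`: the cone
`H^c(K)⟦-c⟧` of the canonical map and its shift by `-1` are both killed by `Hfun`
(`isIso_map_mor₁_of_isZero`). Hence `Hfun (τ≤a K) ≅ Hfun (τ≤b K)` by induction. At the two ends,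
`τ≤b K ≅ K` since there is no cohomology above `b`, and `τ≤a K ≅ H^a(K)⟦-a⟧` since
`τ≤(a-1) K = 0`.
-/

open CategoryTheory Limits Pretriangulated

/-- The data of a t-structure on a pretriangulated category `D`, packaged through its
truncation functors `τ≤n` (with the canonical natural maps `τ≤n → 𝟭 D` and
`τ≤(n-1) → τ≤n`) and its heart-cohomology functors `H^n` (viewed inside `D`), together
with the standard facts: the canonical distinguished triangles
`τ≤(n-1) K ⟶ τ≤n K ⟶ H^n(K)⟦-n⟧ ⟶ (τ≤(n-1) K)⟦1⟧`, the vanishing `τ≤n K ≅ 0` when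
`H^c(K) = 0` for all `c ≤ n`, and the fact that the natural map `τ≤n K → K` is an
isomorphism when `H^c(K) = 0` for all `c > n`. -/
structure TStructureTruncationData (D : Type*) [Category D] [HasZeroObject D]
    [Preadditive D] [HasShift D ℤ] [∀ n : ℤ, (shiftFunctor D n).Additive]
    [Pretriangulated D] where
  /-- the truncation functor `τ≤n` -/
  truncLE : ℤ → D ⥤ D
  /-- the canonical natural transformation `τ≤n → 𝟭 D` -/
  ι : ∀ n : ℤ, truncLE n ⟶ 𝟭 D
  /-- the heart-cohomology functor `H^n`, viewed inside `D` -/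
  H : ℤ → D ⥤ D
  /-- the canonical natural transformation `τ≤(n-1) → τ≤n` -/
  truncLEmap : ∀ n : ℤ, truncLE (n - 1) ⟶ truncLE n
  ι_comm : ∀ (n : ℤ) (K : D),
    (truncLEmap n).app K ≫ (ι n).app K = (ι (n - 1)).app K
  /-- the map `τ≤n K ⟶ H^n(K)⟦-n⟧` -/
  π : ∀ (n : ℤ) (K : D), (truncLE n).obj K ⟶ ((H n).obj K)⟦-n⟧
  /-- the connecting map `H^n(K)⟦-n⟧ ⟶ (τ≤(n-1) K)⟦1⟧` -/
  δ : ∀ (n : ℤ) (K : D), ((H n).obj K)⟦-n⟧ ⟶ ((truncLE (n - 1)).obj K)⟦(1 : ℤ)⟧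
  /-- the canonical triangle `τ≤(n-1) K ⟶ τ≤n K ⟶ H^n(K)⟦-n⟧ ⟶ ⋯` is distinguished -/
  triangle_dist : ∀ (n : ℤ) (K : D),
    Triangle.mk ((truncLEmap n).app K) (π n K) (δ n K) ∈ distTriang D
  /-- if `H^c(K) = 0` for all `c ≤ n` then `τ≤n K ≅ 0` -/
  isZero_truncLE : ∀ (n : ℤ) (K : D),
    (∀ c : ℤ, c ≤ n → IsZero ((H c).obj K)) → IsZero ((truncLE n).obj K)
  /-- if `H^c(K) = 0` for all `c > n` then the natural map `τ≤n K → K` is an isomorphism -/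
  isIso_ι : ∀ (n : ℤ) (K : D),
    (∀ c : ℤ, n < c → IsZero ((H c).obj K)) → IsIso ((ι n).app K)

/-- Exactness of `Hfun` at `Y` makes `Hfun X ⟶ Hfun Y` epi because `Hfun Z = 0`; exactness at `X`
in the inverse rotation `Z⟦-1⟧ ⟶ X ⟶ Y` makes it mono because `Hfun (Z⟦-1⟧) = 0`. -/
theorem isIso_map_mor₁_of_isZero {D : Type*} [Category D] [HasZeroObject D] [Preadditive D]
    [HasShift D ℤ] [∀ n : ℤ, (shiftFunctor D n).Additive] [Pretriangulated D]
    {A : Type*} [Category A] [Abelian A] (Hfun : D ⥤ A) [Hfun.IsHomological]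
    (T : Triangle D) (hT : T ∈ distTriang D)
    (h₀ : IsZero (Hfun.obj T.obj₃)) (h₁ : IsZero (Hfun.obj (T.obj₃⟦(-1 : ℤ)⟧))) :
    IsIso (Hfun.map T.mor₁) := by
  have : Epi (Hfun.map T.mor₁) :=
    (Hfun.map_distinguished_exact T hT).epi_f (h₀.eq_of_tgt _ _)
  have : Mono (Hfun.map T.mor₁) :=
    (Hfun.map_distinguished_exact T.invRotate (inv_rot_of_distTriang T hT)).mono_g
      (h₁.eq_of_src _ _)
  exact isIso_of_mono_of_epi _

/-- Let `D` be a pretriangulated category with a t-structure (heart-cohomology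
functors `H^n`), `Hfun : D ⥤ A` a cohomological functor to an abelian category, `a ≤ b`
integers, and `K` an object with `H^c(K) = 0` for `c < a` and `c > b`, such that
`Hfun (H^c(K)⟦-c⟧) = 0` and `Hfun (H^c(K)⟦-c-1⟧) = 0` for `a < c ≤ b`. Then
`Hfun K ≅ Hfun (H^a(K)⟦-a⟧)`. -/
theorem statement4 {D : Type*} [Category D] [HasZeroObject D] [Preadditive D]
    [HasShift D ℤ] [∀ n : ℤ, (shiftFunctor D n).Additive] [Pretriangulated D]
    (t : TStructureTruncationData D)
    {A : Type*} [Category A] [Abelian A]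
    (Hfun : D ⥤ A) [Hfun.IsHomological]
    (a b : ℤ) (hab : a ≤ b) (K : D)
    (hvanish : ∀ c : ℤ, c < a ∨ b < c → IsZero ((t.H c).obj K))
    (hH : ∀ c : ℤ, a < c → c ≤ b →
      IsZero (Hfun.obj (((t.H c).obj K)⟦-c⟧)) ∧
      IsZero (Hfun.obj (((t.H c).obj K)⟦-c - 1⟧))) :
    Nonempty (Hfun.obj K ≅ Hfun.obj (((t.H a).obj K)⟦-a⟧)) := by
  have key : ∀ n : ℤ, a ≤ n → n ≤ b →
      Nonempty (Hfun.obj ((t.truncLE n).obj K) ≅ Hfun.obj (((t.H a).obj K)⟦-a⟧)) := by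
    intro n hn
    induction n, hn using Int.leInduction with
    | base =>
      intro _
      have hz : IsZero ((t.truncLE (a - 1)).obj K) :=
        t.isZero_truncLE _ _ fun c hc => hvanish c (Or.inl (by lia))
      have : IsIso (t.π a K) :=
        (Triangle.isZero₁_iff_isIso₂ _ (t.triangle_dist a K)).1 hz
      exact ⟨Hfun.mapIso (asIso (t.π a K))⟩
    | succ n hn ih =>
      intro hb
      obtain ⟨e⟩ := ih (by lia)
      obtain ⟨h₀, h₁⟩ := hH (n + 1) (by lia) hb
      have : IsIso (Hfun.map ((t.truncLEmap (n + 1)).app K)) :=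
        isIso_map_mor₁_of_isZero Hfun _ (t.triangle_dist (n + 1) K) h₀
          (h₁.of_iso (Hfun.mapIso
            ((shiftFunctorAdd' D (-(n + 1)) (-1) (-(n + 1) - 1) (by lia)).app _).symm))
      have hsub : n + 1 - 1 = n := by lia
      exact ⟨(asIso (Hfun.map ((t.truncLEmap (n + 1)).app K))).symm ≪≫
        eqToIso (by rw [hsub]) ≪≫ e⟩
  obtain ⟨e⟩ := key b hab le_rfl
  have : IsIso ((t.ι b).app K) := t.isIso_ι b K fun c hc => hvanish c (Or.inr hc)
  exact ⟨(Hfun.mapIso (asIso ((t.ι b).app K))).symm ≪≫ e⟩
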